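/- Assume m ≥ 3 and that ∂_t a(p,r) is a nondegenerate bilinear form on ℝᵐ (the lightlike metric is generic at (p,r)). Suppose Ψ has trivial 1-jet at (p,r) and for all U, V ∈ ℝᵐ × ℝ the function Δ_{U,V} vanishes at (p,r) together with its first and second Fréchet derivatives. Then D³φ_{(p,r)} = 0. -/

import Mathlib

/-- The defect of the isometry equation for the lightlike metric
`g_{(x,t)}(U,V) = a(x,t)(U_M, V_M)` on `M × I ⊆ ℝᵐ × ℝ` under a candidate isometry
`Ψ = (φ, δ)`:
`Δ_{U,V}(v) = a(Ψ(v))(Dφ_v U, Dφ_v V) − a(v)(U_M, V_M)`. -/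
noncomputable def lightDelta (m : ℕ)
    (a : (Fin m → ℝ) → ℝ → ((Fin m → ℝ) →L[ℝ] (Fin m → ℝ) →L[ℝ] ℝ))
    (φ : (Fin m → ℝ) × ℝ → (Fin m → ℝ)) (δ : (Fin m → ℝ) × ℝ → ℝ)
    (U V : (Fin m → ℝ) × ℝ) (v : (Fin m → ℝ) × ℝ) : ℝ :=
  a (φ v) (δ v) (fderiv ℝ φ v U) (fderiv ℝ φ v V) - a v.1 v.2 U.1 V.1

open scoped ContDiff

theorem lf_first {E F : Type*} [NormedAddCommGroup E] [NormedSpace ℝ E]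
    [NormedAddCommGroup F] [NormedSpace ℝ F] (b : E → F →L[ℝ] F →L[ℝ] ℝ) (f g : E → F) (v : E)
    (hb : DifferentiableAt ℝ b v) (hf : DifferentiableAt ℝ f v) (hg : DifferentiableAt ℝ g v)
    (W : E) :
    fderiv ℝ (fun v => b v (f v) (g v)) v W
      = fderiv ℝ b v W (f v) (g v) + b v (fderiv ℝ f v W) (g v) + b v (f v) (fderiv ℝ g v W) := by
  have h := ((hb.hasFDerivAt.clm_apply hf.hasFDerivAt).clm_apply hg.hasFDerivAt).fderiv
  rw [h]
  simp
  ring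

theorem lf_apply {E G : Type*} [NormedAddCommGroup E] [NormedSpace ℝ E]
    [NormedAddCommGroup G] [NormedSpace ℝ G] (L : E → E →L[ℝ] G) (v X W : E)
    (hL : DifferentiableAt ℝ L v) :
    fderiv ℝ (fun v => L v W) v X = fderiv ℝ L v X W := by
  have h := (hL.hasFDerivAt.clm_apply (hasFDerivAt_const W v)).fderiv
  rw [h]
  simp

theorem lf_smooth_fderiv {E G : Type*} [NormedAddCommGroup E] [NormedSpace ℝ E]
    [NormedAddCommGroup G] [NormedSpace ℝ G] {f : E → G} {v : E}
    (hf : ContDiffAt ℝ ∞ f v) : ContDiffAt ℝ ∞ (fderiv ℝ f) v :=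
  hf.fderiv_right (by simp)

theorem lf_ev_diff {E G : Type*} [NormedAddCommGroup E] [NormedSpace ℝ E]
    [NormedAddCommGroup G] [NormedSpace ℝ G] {f : E → G} {v : E}
    (hf : ContDiffAt ℝ ∞ f v) : ∀ᶠ w in nhds v, DifferentiableAt ℝ f w := by
  have h1 : ContDiffAt ℝ 1 f v := hf.of_le (by exact_mod_cast le_top)
  filter_upwards [h1.eventually (by simp)] with w hw
  exact hw.differentiableAt (by simp)

theorem lf_diff {E G : Type*} [NormedAddCommGroup E] [NormedSpace ℝ E]
    [NormedAddCommGroup G] [NormedSpace ℝ G] {f : E → G} {v : E}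
    (hf : ContDiffAt ℝ ∞ f v) : DifferentiableAt ℝ f v := (lf_ev_diff hf).self_of_nhds

set_option synthInstance.maxHeartbeats 400000 in
set_option maxSynthPendingDepth 5 in
set_option maxHeartbeats 1000000 in
theorem lf_second {E F : Type*} [NormedAddCommGroup E] [NormedSpace ℝ E]
    [NormedAddCommGroup F] [NormedSpace ℝ F] (b : E → F →L[ℝ] F →L[ℝ] ℝ) (f g : E → F) (v : E)
    (hb : ContDiffAt ℝ ∞ b v) (hf : ContDiffAt ℝ ∞ f v) (hg : ContDiffAt ℝ ∞ g v)
    (hf0 : fderiv ℝ f v = 0) (hg0 : fderiv ℝ g v = 0) (X W : E) :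
    fderiv ℝ (fderiv ℝ (fun v => b v (f v) (g v))) v X W
      = fderiv ℝ (fderiv ℝ b) v X W (f v) (g v) + b v (fderiv ℝ (fderiv ℝ f) v X W) (g v)
        + b v (f v) (fderiv ℝ (fderiv ℝ g) v X W) := by
  have hF : ContDiffAt ℝ ∞ (fun v => b v (f v) (g v)) v := (hb.clm_apply hf).clm_apply hg
  rw [← lf_apply _ _ _ _ (lf_diff (lf_smooth_fderiv hF))]
  have hev : (fun w => fderiv ℝ (fun v => b v (f v) (g v)) w W) =ᶠ[nhds v]
      (fun w => fderiv ℝ b w W (f w) (g w) + b w (fderiv ℝ f w W) (g w)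
        + b w (f w) (fderiv ℝ g w W)) := by
    filter_upwards [lf_ev_diff hb, lf_ev_diff hf, lf_ev_diff hg] with w h1 h2 h3
    exact lf_first b f g w h1 h2 h3 W
  rw [hev.fderiv_eq]
  have cb := (lf_smooth_fderiv hb).clm_apply (contDiffAt_const (c := W))
  have cf := (lf_smooth_fderiv hf).clm_apply (contDiffAt_const (c := W))
  have cg := (lf_smooth_fderiv hg).clm_apply (contDiffAt_const (c := W))
  have d1 := lf_diff ((cb.clm_apply hf).clm_apply hg)
  have d2 := lf_diff ((hb.clm_apply cf).clm_apply hg)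
  have d3 := lf_diff ((hb.clm_apply hf).clm_apply cg)
  have d12 : DifferentiableAt ℝ (fun w => fderiv ℝ b w W (f w) (g w)
      + b w (fderiv ℝ f w W) (g w)) v := d1.add d2
  rw [fderiv_fun_add d12 d3, fderiv_fun_add d1 d2]
  simp only [add_apply]
  rw [lf_first _ _ _ _ (lf_diff cb) (lf_diff hf) (lf_diff hg),
    lf_first _ _ _ _ (lf_diff hb) (lf_diff cf) (lf_diff hg),
    lf_first _ _ _ _ (lf_diff hb) (lf_diff hf) (lf_diff cg),
    lf_apply _ _ _ _ (lf_diff (lf_smooth_fderiv hb)),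
    lf_apply _ _ _ _ (lf_diff (lf_smooth_fderiv hf)),
    lf_apply _ _ _ _ (lf_diff (lf_smooth_fderiv hg))]
  simp [hf0, hg0]

/-- Second derivative of a composition with a map with trivial 1-jet. -/
theorem lf_comp {E G : Type*} [NormedAddCommGroup E] [NormedSpace ℝ E]
    [NormedAddCommGroup G] [NormedSpace ℝ G] (A : E → G) (P : E → E) (v : E)
    (hA : ContDiffAt ℝ ∞ A v) (hP : ContDiffAt ℝ ∞ P v) (hPv : P v = v)
    (hDP : fderiv ℝ P v = ContinuousLinearMap.id ℝ E) (X W : E) :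
    fderiv ℝ (fderiv ℝ (fun w => A (P w))) v X W
      = fderiv ℝ (fderiv ℝ A) v X W + fderiv ℝ A v (fderiv ℝ (fderiv ℝ P) v X W) := by
  have hA' : ContDiffAt ℝ ∞ A (P v) := by rwa [hPv]
  have hAP : ContDiffAt ℝ ∞ (fun w => A (P w)) v := hA'.comp v hP
  rw [← lf_apply _ _ _ _ (lf_diff (lf_smooth_fderiv hAP))]
  have hev : (fun w => fderiv ℝ (fun w => A (P w)) w W) =ᶠ[nhds v]
      (fun w => fderiv ℝ A (P w) (fderiv ℝ P w W)) := by
    filter_upwards [hP.continuousAt.eventually (lf_ev_diff hA'), lf_ev_diff hP] with w h1 h2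
    have := (h1.hasFDerivAt.comp w h2.hasFDerivAt).fderiv
    change fderiv ℝ (A ∘ P) w W = _
    rw [this]; rfl
  rw [hev.fderiv_eq]
  have hdA := lf_diff (lf_smooth_fderiv hA')
  have hdP := lf_diff (lf_smooth_fderiv hP)
  have h1 : HasFDerivAt (fun w => fderiv ℝ A (P w)) _ v :=
    hdA.hasFDerivAt.comp v (lf_diff hP).hasFDerivAt
  have h2 := hdP.hasFDerivAt.clm_apply (hasFDerivAt_const W v)
  rw [(h1.clm_apply h2).fderiv]
  simp [hPv, hDP, add_comm]

theorem lf_two_le : (2 : WithTop ℕ∞) ≤ ∞ :=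
  WithTop.coe_le_coe.2 (le_top : (2 : ℕ∞) ≤ ⊤)

theorem lf_symm {E G : Type*} [NormedAddCommGroup E] [NormedSpace ℝ E]
    [NormedAddCommGroup G] [NormedSpace ℝ G] {f : E → G} {v : E}
    (hf : ContDiffAt ℝ ∞ f v) (X W : E) :
    fderiv ℝ (fderiv ℝ f) v X W = fderiv ℝ (fderiv ℝ f) v W X := by
  exact (hf.isSymmSndFDerivAt (by simpa using lf_two_le)) X W

theorem lf_symm3 {E G : Type*} [NormedAddCommGroup E] [NormedSpace ℝ E]
    [NormedAddCommGroup G] [NormedSpace ℝ G] {f : E → G} {v : E}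
    (hf : ContDiffAt ℝ ∞ f v) (X W U : E) :
    fderiv ℝ (fderiv ℝ (fderiv ℝ f)) v X W U = fderiv ℝ (fderiv ℝ (fderiv ℝ f)) v X U W := by
  have h2 := lf_smooth_fderiv (lf_smooth_fderiv hf)
  have key : ∀ W U : E, fderiv ℝ (fun w => fderiv ℝ (fderiv ℝ f) w W U) v X
      = fderiv ℝ (fderiv ℝ (fderiv ℝ f)) v X W U := by
    intro W U
    rw [lf_apply (fun w => fderiv ℝ (fderiv ℝ f) w W) v X U
      (lf_diff (h2.clm_apply contDiffAt_const)), lf_apply _ _ _ _ (lf_diff h2)]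
  rw [← key, ← key]
  refine congrArg (fun L : E →L[ℝ] G => L X) (Filter.EventuallyEq.fderiv_eq ?_)
  have h1 : ContDiffAt ℝ 2 f v := hf.of_le lf_two_le
  filter_upwards [h1.eventually (by simp)] with w hw
  exact (hw.isSymmSndFDerivAt (by simp)) W U

/-- Algebra: `s` with vanishing Kulkarni–Nomizu product with nondegenerate `h` vanishes. -/
theorem lf_alg {m : ℕ} (hm : 3 ≤ m) (h : (Fin m → ℝ) →ₗ[ℝ] (Fin m → ℝ) →ₗ[ℝ] ℝ)
    (hsym : ∀ u v, h u v = h v u) (hnd : ∀ u, (∀ v, h u v = 0) → u = 0)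
    (s : (Fin m → ℝ) →ₗ[ℝ] (Fin m → ℝ) →ₗ[ℝ] ℝ)
    (hs : ∀ W X U V, s W U * h X V - s W V * h X U = s X U * h W V - s X V * h W U) :
    ∀ W U, s W U = 0 := by
  have hinj : Function.Injective h := by
    rw [injective_iff_map_eq_zero]
    intro u hu
    exact hnd u (fun v => by rw [hu]; rfl)
  have hnon : LinearMap.BilinForm.Nondegenerate h := by
    refine ⟨fun u hu => hnd u hu, fun u hu => hnd u (fun v => by rw [hsym]; exact hu v)⟩
  let e := Pi.basisFun ℝ (Fin m)
  let f := LinearMap.BilinForm.dualBasis h hnon e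
  have hfe : ∀ i j, h (f i) (e j) = if j = i then 1 else 0 :=
    fun i j => LinearMap.BilinForm.apply_dualBasis_left hnon e i j
  have hef : ∀ i j, h (e i) (f j) = if i = j then 1 else 0 := fun i j => by rw [hsym, hfe]
  have r1 : ∀ U, ∑ i, h (e i) U • f i = U := by
    intro U
    refine sub_eq_zero.1 (hnd _ fun v => ?_)
    rw [hsym]
    have : ∀ v, h v (∑ i, h (e i) U • f i - U) = 0 := by
      have : h.flip (∑ i, h (e i) U • f i - U) = 0 := by
        refine e.ext fun j => ?_
        simp [map_sum, hef]
      intro v; exact congrArg (fun L : (Fin m → ℝ) →ₗ[ℝ] ℝ => L v) this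
    exact this v
  have r2 : ∀ W, ∑ i, h W (f i) • e i = W := by
    intro U
    refine sub_eq_zero.1 (hnd _ fun v => ?_)
    rw [hsym]
    have : ∀ v, h v (∑ i, h U (f i) • e i - U) = 0 := by
      have : h.flip (∑ i, h U (f i) • e i - U) = 0 := by
        refine f.ext fun j => ?_
        simp [map_sum, hfe, hsym U]
      intro v; exact congrArg (fun L : (Fin m → ℝ) →ₗ[ℝ] ℝ => L v) this
    exact this v
  set τ := ∑ i, s (e i) (f i) with hτ
  have hm' : (3 : ℝ) ≤ m := by exact_mod_cast hm
  have c1 : ∀ W U, ((m : ℝ) - 2) * s W U = - τ * h W U := by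
    intro W U
    have e1 : ∑ i, s W (f i) * h (e i) U = s W U := by
      conv_rhs => rw [← r1 U]
      simp [map_sum, mul_comm]
    have e2 : ∑ i, s (e i) U * h W (f i) = s W U := by
      conv_rhs => rw [← r2 W]
      simp [map_sum, mul_comm]
    have := Finset.sum_congr (rfl : (Finset.univ : Finset (Fin m)) = _)
      (fun i _ => hs W (e i) U (f i))
    rw [Finset.sum_sub_distrib, Finset.sum_sub_distrib, e1, e2, ← Finset.sum_mul] at this
    simp only [hef] at this
    simp at this
    linarith
  have c2 : τ = 0 := by
    have := Finset.sum_congr (rfl : (Finset.univ : Finset (Fin m)) = _)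
      (fun i _ => c1 (e i) (f i))
    rw [← Finset.mul_sum, ← Finset.mul_sum] at this
    simp only [hef] at this
    simp at this
    have h3 : τ * (2 * (m : ℝ) - 2) = 0 := by rw [hτ]; linarith
    rcases mul_eq_zero.1 h3 with h4 | h4
    · exact h4
    · linarith
  intro W U
  have := c1 W U
  rw [c2] at this
  simp at this
  rcases this with h4 | h4
  · linarith
  · exact h4

theorem lf_fst {E G H : Type*} [NormedAddCommGroup E] [NormedSpace ℝ E]
    [NormedAddCommGroup G] [NormedSpace ℝ G] [NormedAddCommGroup H] [NormedSpace ℝ H]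
    {P : E → G × H} {v : E}
    (hP : ContDiffAt ℝ ∞ P v) (X W : E) :
    fderiv ℝ (fderiv ℝ (fun w => (P w).1)) v X W = (fderiv ℝ (fderiv ℝ P) v X W).1 := by
  have h1 : ContDiffAt ℝ ∞ (fun w => (P w).1) v := contDiffAt_fst.comp v hP
  rw [← lf_apply _ _ _ _ (lf_diff (lf_smooth_fderiv h1)),
    ← lf_apply _ _ _ _ (lf_diff (lf_smooth_fderiv hP))]
  have hev : (fun w => fderiv ℝ (fun w => (P w).1) w W) =ᶠ[nhds v]
      (fun w => (fderiv ℝ P w W).1) := by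
    filter_upwards [lf_ev_diff hP] with w h1
    rw [h1.hasFDerivAt.fst.fderiv]; rfl
  rw [hev.fderiv_eq]
  have hd := lf_diff ((lf_smooth_fderiv hP).clm_apply (contDiffAt_const (c := W)))
  rw [hd.hasFDerivAt.fst.fderiv]; rfl

theorem lf_compD {E G : Type*} [NormedAddCommGroup E] [NormedSpace ℝ E]
    [NormedAddCommGroup G] [NormedSpace ℝ G] (A : E → G) (P : E → E) (v : E)
    (hA : ContDiffAt ℝ ∞ A v) (hP : ContDiffAt ℝ ∞ P v) (hPv : P v = v)
    (hDP : fderiv ℝ P v = ContinuousLinearMap.id ℝ E) :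
    fderiv ℝ (fun w => A (P w)) v = fderiv ℝ A v := by
  have hA' : ContDiffAt ℝ ∞ A (P v) := by rwa [hPv]
  have h := ((lf_diff hA').hasFDerivAt.comp v (lf_diff hP).hasFDerivAt).fderiv
  rw [hDP, hPv] at h
  exact h

theorem lf_curve {E G : Type*} [NormedAddCommGroup E] [NormedSpace ℝ E]
    [NormedAddCommGroup G] [NormedSpace ℝ G] (A : E × ℝ → G) (p : E) (r : ℝ)
    (hA : ContDiffAt ℝ ∞ A (p, r)) :
    HasDerivAt (fun t => A (p, t)) (deriv (fun t => A (p, t)) r) r ∧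
      deriv (fun t => A (p, t)) r = fderiv ℝ A (p, r) (0, 1) := by
  have hc : HasDerivAt (fun t : ℝ => ((p, t) : E × ℝ)) (0, 1) r :=
    (hasDerivAt_const r p).prodMk (hasDerivAt_id r)
  have h := HasFDerivAt.comp_hasDerivAt (f := fun t : ℝ => ((p, t) : E × ℝ)) r
      (lf_diff hA).hasFDerivAt hc
  have h' : HasDerivAt (fun t => A (p, t)) (fderiv ℝ A (p, r) (0, 1)) r := h
  rw [h'.deriv]
  exact ⟨h', rfl⟩

set_option maxHeartbeats 4000000 in
/-- For `m ≥ 3` and a lightlike metric generic at `(p,r)` (`∂_t a(p,r)` nondegenerate),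
a `3`-isometry `Ψ = (φ, δ)` with trivial `1`-jet at `(p,r)` satisfies
`D³φ_{(p,r)} = 0`. -/
theorem lightlike_third_derivative_vanishes
    (m : ℕ) (hm : 3 ≤ m) (M : Set (Fin m → ℝ)) (hM : IsOpen M)
    (p : Fin m → ℝ) (hp : p ∈ M)
    (I : Set ℝ) (hIopen : IsOpen I) (hIconn : I.OrdConnected)
    (r : ℝ) (hr : r ∈ I)
    (a : (Fin m → ℝ) → ℝ → ((Fin m → ℝ) →L[ℝ] (Fin m → ℝ) →L[ℝ] ℝ))
    (ha_smooth : ContDiffOn ℝ (⊤ : ℕ∞) (fun q : (Fin m → ℝ) × ℝ => a q.1 q.2) (M ×ˢ I))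
    (ha_symm : ∀ x ∈ M, ∀ t ∈ I, ∀ U V : Fin m → ℝ, a x t U V = a x t V U)
    (ha_pos : ∀ x ∈ M, ∀ t ∈ I, ∀ U : Fin m → ℝ, U ≠ 0 → 0 < a x t U U)
    (ha_generic : ∀ U : Fin m → ℝ,
      (∀ V : Fin m → ℝ, deriv (fun t => a p t) r U V = 0) → U = 0)
    (φ : (Fin m → ℝ) × ℝ → (Fin m → ℝ)) (δ : (Fin m → ℝ) × ℝ → ℝ)
    (hΨ_smooth : ContDiffOn ℝ (⊤ : ℕ∞) (fun v => (φ v, δ v)) (M ×ˢ I))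
    (hΨ_maps : ∀ v ∈ M ×ˢ I, (φ v, δ v) ∈ M ×ˢ I)
    (hΨp : (φ (p, r), δ (p, r)) = (p, r))
    (hDΨp : fderiv ℝ (fun v => (φ v, δ v)) (p, r)
      = ContinuousLinearMap.id ℝ ((Fin m → ℝ) × ℝ))
    (hΔ : ∀ U V : (Fin m → ℝ) × ℝ, lightDelta m a φ δ U V (p, r) = 0)
    (hΔ' : ∀ U V : (Fin m → ℝ) × ℝ, fderiv ℝ (lightDelta m a φ δ U V) (p, r) = 0)
    (hΔ'' : ∀ U V : (Fin m → ℝ) × ℝ,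
      fderiv ℝ (fderiv ℝ (lightDelta m a φ δ U V)) (p, r) = 0) :
    fderiv ℝ (fderiv ℝ (fderiv ℝ φ)) (p, r) = 0 := by
  have hopen : IsOpen (M ×ˢ I) := hM.prod hIopen
  have hv0 : ((p, r) : (Fin m → ℝ) × ℝ) ∈ M ×ˢ I := ⟨hp, hr⟩
  have hA : ContDiffAt ℝ ∞ (fun q : (Fin m → ℝ) × ℝ => a q.1 q.2) (p, r) :=
    ha_smooth.contDiffAt (hopen.mem_nhds hv0)
  have hP : ContDiffAt ℝ ∞ (fun v => (φ v, δ v)) (p, r) :=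
    hΨ_smooth.contDiffAt (hopen.mem_nhds hv0)
  have hφ : ContDiffAt ℝ ∞ φ (p, r) := contDiffAt_fst.comp (p, r) hP
  have hφp : φ (p, r) = p := congrArg Prod.fst hΨp
  have hδp : δ (p, r) = r := congrArg Prod.snd hΨp
  have hDφ : ∀ U, fderiv ℝ φ (p, r) U = U.1 := by
    intro U
    have h := (lf_diff hP).hasFDerivAt.fst.fderiv
    rw [hDΨp] at h
    change fderiv ℝ φ (p, r) = _ at h
    rw [h]; rfl
  have hb : ContDiffAt ℝ ∞ (fun v => a (φ v) (δ v)) (p, r) := by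
    have hA' : ContDiffAt ℝ ∞ (fun q : (Fin m → ℝ) × ℝ => a q.1 q.2) (φ (p, r), δ (p, r)) := by
      rw [hΨp]; exact hA
    exact ContDiffAt.comp (p, r) (f := fun v => (φ v, δ v)) hA' hP
  have hf : ∀ U, ContDiffAt ℝ ∞ (fun v => fderiv ℝ φ v U) (p, r) := fun U =>
    (lf_smooth_fderiv hφ).clm_apply contDiffAt_const
  have hpd : ∀ u : Fin m → ℝ, (∀ v, a p r u v = 0) → u = 0 := by
    intro u hu
    by_contra hne
    exact absurd (hu u) (ha_pos p hp r hr u hne).ne'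
  have hF1 : ∀ U V, ContDiffAt ℝ ∞
      (fun v => a (φ v) (δ v) (fderiv ℝ φ v U) (fderiv ℝ φ v V)) (p, r) :=
    fun U V => (hb.clm_apply (hf U)).clm_apply (hf V)
  have hF2 : ∀ U V : (Fin m → ℝ) × ℝ, ContDiffAt ℝ ∞
      (fun v : (Fin m → ℝ) × ℝ => a v.1 v.2 U.1 V.1) (p, r) :=
    fun U V => (hA.clm_apply contDiffAt_const).clm_apply contDiffAt_const
  have hDb : fderiv ℝ (fun v => a (φ v) (δ v)) (p, r)
      = fderiv ℝ (fun q : (Fin m → ℝ) × ℝ => a q.1 q.2) (p, r) := by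
    exact lf_compD _ _ _ hA hP hΨp hDΨp
  -- the second derivative of `φ` vanishes
  have E1 : ∀ U V W, a p r (fderiv ℝ (fderiv ℝ φ) (p, r) W U) V.1
      + a p r U.1 (fderiv ℝ (fderiv ℝ φ) (p, r) W V) = 0 := by
    intro U V W
    have h := congrArg (fun L : (Fin m → ℝ) × ℝ →L[ℝ] ℝ => L W) (hΔ' U V)
    change fderiv ℝ (fun v => a (φ v) (δ v) (fderiv ℝ φ v U) (fderiv ℝ φ v V)
      - a v.1 v.2 U.1 V.1) (p, r) W = 0 at h
    rw [fderiv_fun_sub (lf_diff (hF1 U V)) (lf_diff (hF2 U V)), sub_apply,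
      lf_first _ _ _ _ (lf_diff hb) (lf_diff (hf U)) (lf_diff (hf V)),
      lf_first (fun v : (Fin m → ℝ) × ℝ => a v.1 v.2) (fun _ => U.1) (fun _ => V.1) _
        (lf_diff hA) (by fun_prop) (by fun_prop),
      lf_apply _ _ _ _ (lf_diff (lf_smooth_fderiv hφ)),
      lf_apply _ _ _ _ (lf_diff (lf_smooth_fderiv hφ)), hDb, hφp, hδp, hDφ, hDφ] at h
    simp at h
    linarith
  have hsy := ha_symm p hp r hr
  have B0 : ∀ W U, fderiv ℝ (fderiv ℝ φ) (p, r) W U = 0 := by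
    intro W U
    refine hpd _ fun v => ?_
    have s := fun X Y => lf_symm hφ X Y
    let V : (Fin m → ℝ) × ℝ := (v, 0)
    have h1 := E1 U V W
    have h2 := E1 W V U
    have h3 := E1 U W V
    rw [hsy U.1] at h1
    rw [hsy W.1] at h2
    rw [hsy U.1] at h3
    rw [s U W] at h2
    rw [s V U, s V W] at h3
    change a p r (fderiv ℝ (fderiv ℝ φ) (p, r) W U) V.1 = 0
    linarith
  have B00 : fderiv ℝ (fderiv ℝ φ) (p, r) = 0 := by
    refine ContinuousLinearMap.ext fun W => ?_; refine ContinuousLinearMap.ext fun U => ?_; exact B0 W U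
  have hDf0 : ∀ U, fderiv ℝ (fun v => fderiv ℝ φ v U) (p, r) = 0 := by
    intro U
    refine ContinuousLinearMap.ext fun W => ?_
    rw [lf_apply _ _ _ _ (lf_diff (lf_smooth_fderiv hφ)), B0]; rfl
  have hDDf : ∀ U X W, fderiv ℝ (fderiv ℝ (fun v => fderiv ℝ φ v U)) (p, r) X W
      = fderiv ℝ (fderiv ℝ (fderiv ℝ φ)) (p, r) X W U := by
    intro U X W
    have h2 := lf_smooth_fderiv (lf_smooth_fderiv hφ)
    have hev : (fun w => fderiv ℝ (fun v => fderiv ℝ φ v U) w W) =ᶠ[nhds (p, r)]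
        (fun w => fderiv ℝ (fderiv ℝ φ) w W U) := by
      filter_upwards [lf_ev_diff (lf_smooth_fderiv hφ)] with w hw
      exact lf_apply _ _ _ _ hw
    rw [← lf_apply _ _ _ _ (lf_diff (lf_smooth_fderiv (hf U))), hev.fderiv_eq,
      lf_apply (fun w => fderiv ℝ (fderiv ℝ φ) w W) _ X U
        (lf_diff (h2.clm_apply contDiffAt_const)), lf_apply _ _ _ _ (lf_diff h2)]
  -- the bilinear forms `h` and `s`
  set h : (Fin m → ℝ) →L[ℝ] (Fin m → ℝ) →L[ℝ] ℝ := deriv (fun t => a p t) r with hh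
  have hcurve : HasDerivAt (fun t => a p t) h r := (lf_curve _ p r hA).1
  have hhe : h = fderiv ℝ (fun q : (Fin m → ℝ) × ℝ => a q.1 q.2) (p, r) (0, 1) :=
    (lf_curve _ p r hA).2
  have hhsym : ∀ u v, h u v = h v u := by
    intro u v
    have key : ∀ u v, HasDerivAt (fun t => a p t u v) (h u v) r := by
      intro u v
      have h1 := (hcurve.clm_apply (hasDerivAt_const r u)).clm_apply (hasDerivAt_const r v)
      simpa using h1
    refine (key u v).unique ((key v u).congr_of_eventuallyEq ?_)
    filter_upwards [hIopen.mem_nhds hr] with t ht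
    exact ha_symm p hp t ht u v
  set S := fderiv ℝ (fderiv ℝ (fun v => (φ v, δ v))) (p, r) with hS
  have hSsym : ∀ X W, S X W = S W X := fun X W => lf_symm hP X W
  have hS1 : ∀ X W, (S X W).1 = 0 := fun X W => by
    rw [hS, ← lf_fst hP]; exact B0 X W
  set_option synthInstance.maxHeartbeats 400000 in
  set_option maxSynthPendingDepth 5 in
  have hDDb : ∀ X W, fderiv ℝ (fderiv ℝ (fun v => a (φ v) (δ v))) (p, r) X W
      = fderiv ℝ (fderiv ℝ (fun q : (Fin m → ℝ) × ℝ => a q.1 q.2)) (p, r) X W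
        + (S X W).2 • h := by
    intro X W
    have h1 := lf_comp _ _ _ hA hP hΨp hDΨp X W
    have h2 : S X W = (S X W).2 • ((0, 1) : (Fin m → ℝ) × ℝ) := by
      refine Prod.ext ?_ ?_
      · simp [hS1]
      · simp
    rw [hhe, ← map_smul, ← h2]
    exact h1
  set T := fderiv ℝ (fderiv ℝ (fderiv ℝ φ)) (p, r) with hT
  have T1 : ∀ X W U, T X W U = T W X U := fun X W U => by
    rw [hT, lf_symm (lf_smooth_fderiv hφ) X W]
  have T2 : ∀ X W U, T X W U = T X U W := fun X W U => lf_symm3 hφ X W U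
  set_option synthInstance.maxHeartbeats 400000 in
  set_option maxSynthPendingDepth 5 in
  have E2 : ∀ X W U V, (S X W).2 * h U.1 V.1 + a p r (T X W U) V.1 + a p r (T X W V) U.1 = 0 := by
    intro X W U V
    have h0 := congrArg
      (fun L : (Fin m → ℝ) × ℝ →L[ℝ] (Fin m → ℝ) × ℝ →L[ℝ] ℝ => L X W) (hΔ'' U V)
    change fderiv ℝ (fderiv ℝ (fun v => a (φ v) (δ v) (fderiv ℝ φ v U) (fderiv ℝ φ v V)
      - a v.1 v.2 U.1 V.1)) (p, r) X W = 0 at h0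
    have hev : fderiv ℝ (fun v => a (φ v) (δ v) (fderiv ℝ φ v U) (fderiv ℝ φ v V)
        - a v.1 v.2 U.1 V.1) =ᶠ[nhds (p, r)]
        (fun w => fderiv ℝ (fun v => a (φ v) (δ v) (fderiv ℝ φ v U) (fderiv ℝ φ v V)) w
          - fderiv ℝ (fun v : (Fin m → ℝ) × ℝ => a v.1 v.2 U.1 V.1) w) := by
      filter_upwards [lf_ev_diff (hF1 U V), lf_ev_diff (hF2 U V)] with w h1 h2
      exact fderiv_fun_sub h1 h2
    rw [hev.fderiv_eq, fderiv_fun_sub (lf_diff (lf_smooth_fderiv (hF1 U V)))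
        (lf_diff (lf_smooth_fderiv (hF2 U V))), sub_apply,
      sub_apply,
      lf_second _ _ _ _ hb (hf U) (hf V) (hDf0 U) (hDf0 V),
      lf_second (fun v : (Fin m → ℝ) × ℝ => a v.1 v.2) (fun _ => U.1) (fun _ => V.1) _
        hA contDiffAt_const contDiffAt_const (by simp) (by simp),
      hDDf, hDDf, hDDb, hφp, hδp, hDφ, hDφ, hsy U.1] at h0
    simp at h0
    linarith
  have E3 : ∀ X W U V, 2 * a p r (T W X U) V.1 = -((S W X).2 * h U.1 V.1
      + (S W U).2 * h X.1 V.1 - (S W V).2 * h X.1 U.1) := by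
    intro X W U V
    have h1 := E2 W X U V
    have h2 := E2 W U X V
    have h3 := E2 W V X U
    rw [T2 W U X] at h2
    rw [T2 W V X, T2 W V U] at h3
    linarith
  have KN : ∀ W X U V : (Fin m → ℝ) × ℝ, (S W U).2 * h X.1 V.1 - (S W V).2 * h X.1 U.1
      = (S X U).2 * h W.1 V.1 - (S X V).2 * h W.1 U.1 := by
    intro W X U V
    have h1 := E3 X W U V
    have h2 := E3 W X U V
    rw [T1 W X U, hSsym W X] at h1
    linarith
  let hl : (Fin m → ℝ) →ₗ[ℝ] (Fin m → ℝ) →ₗ[ℝ] ℝ :=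
    LinearMap.mk₂ ℝ (fun u v => h u v) (by intros; simp) (by intros; simp) (by intros; simp)
      (by intros; simp)
  let ι : (Fin m → ℝ) →ₗ[ℝ] (Fin m → ℝ) × ℝ := LinearMap.inl ℝ _ _
  let sl : (Fin m → ℝ) →ₗ[ℝ] (Fin m → ℝ) →ₗ[ℝ] ℝ :=
    LinearMap.mk₂ ℝ (fun u v => (S (ι u) (ι v)).2)
      (by intros; simp only [map_add, add_apply, Prod.snd_add])
      (by intros; simp only [map_smul, smul_apply, Prod.smul_snd])
      (by intros; simp only [map_add, Prod.snd_add])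
      (by intros; simp only [map_smul, Prod.smul_snd])
  have s0 : ∀ w u : Fin m → ℝ, (S (w, 0) (u, 0)).2 = 0 := fun w u =>
    lf_alg hm hl hhsym ha_generic sl (fun W X U V => KN (W, 0) (X, 0) (U, 0) (V, 0)) w u
  -- distinct basis vectors
  let i0 : Fin m := ⟨0, by omega⟩
  let i1 : Fin m := ⟨1, by omega⟩
  have hne : i0 ≠ i1 := by simp [i0, i1, Fin.ext_iff]
  have n0 : ∃ x v : Fin m → ℝ, h x v ≠ 0 := by
    by_contra hcon
    push Not at hcon
    have h1 := ha_generic (Pi.single i0 1) (fun v => hcon _ v)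
    have h2 := congrFun h1 i0
    simp at h2
  have s1 : ∀ u : Fin m → ℝ, (S (0, 1) (u, 0)).2 = 0 := by
    have h1 : ∀ u v : Fin m → ℝ, (S (0, 1) (u, 0)).2 • v - (S (0, 1) (v, 0)).2 • u = 0 := by
      intro u v
      refine ha_generic _ fun x => ?_
      have h2 := KN (0, 1) (x, 0) (u, 0) (v, 0)
      rw [hhsym]
      simp at h2 ⊢
      linarith
    intro u
    by_cases hu : u = 0
    · subst hu
      have : (((0 : Fin m → ℝ), (0 : ℝ)) : (Fin m → ℝ) × ℝ) = 0 := rfl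
      rw [this]; simp
    · by_contra hc
      -- every `v` is a multiple of `u`
      have q0 := h1 u (Pi.single i0 1)
      have q1 := h1 u (Pi.single i1 1)
      have a0 := congrFun q0 i0
      have a1 := congrFun q0 i1
      have b0 := congrFun q1 i0
      have b1 := congrFun q1 i1
      simp [hne, hne.symm] at a0 a1 b0 b1
      rcases a1 with a1 | a1
      · rw [a1] at a0; simp at a0; exact hc a0
      · rw [a1] at b1; simp at b1; exact hc b1
  have s2 : (S (0, 1) (0, 1)).2 = 0 := by
    obtain ⟨x, v, hxv⟩ := n0
    have h2 := KN (0, 1) (x, 0) (0, 1) (v, 0)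
    simp at h2
    rcases h2 with h2 | h2
    · exact h2
    · exact absurd h2 hxv
  have sall : ∀ W U, (S W U).2 = 0 := by
    have hd : ∀ W : (Fin m → ℝ) × ℝ, W = (W.1, 0) + W.2 • ((0 : Fin m → ℝ), (1 : ℝ)) := by
      intro W; refine Prod.ext ?_ ?_ <;> simp
    intro W U
    rw [hd W, hd U]
    simp only [map_add, map_smul, add_apply, smul_apply,
      Prod.snd_add, Prod.smul_snd, s0, s1, s2, hSsym (_, 0) (0, 1)]
    simp
  refine ContinuousLinearMap.ext fun W => ?_; refine ContinuousLinearMap.ext fun X => ?_; refine ContinuousLinearMap.ext fun U => ?_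
  refine hpd _ fun v => ?_
  have h1 := E3 X W U (v, 0)
  rw [sall, sall, sall] at h1
  simp at h1
  exact h1
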